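/- Let γ > 1, R > 0, T∞ > 0, m > 0 and u∞ < 0 be real constants. Suppose ñ, ũ, T̃, φ̃ : [0,∞) → ℝ are differentiable, ñ > 0 and T̃ > 0 everywhere, and for all x ≥ 0: (ñũ)'(x) = 0, ũ(x)T̃'(x) + (γ−1)T̃(x)ũ'(x) = 0, and m ñ(x)ũ(x)ũ'(x) + (R T̃ ñ)'(x) = ñ(x)φ̃'(x); assume ñ → 1, ũ → u∞, T̃ → T∞ and φ̃ → 0 as x → ∞. Then φ̃(x) = f(ñ(x)) for all x ≥ 0, where f is the Sagdeev function. -/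

import Mathlib

open Real Set Filter

/-!
The stationary system has three first integrals. Mass conservation makes `n u` constant, so a
nonzero far-field velocity keeps `u` from vanishing and the temperature equation can be divided by
it: this is the adiabatic relation `T' / T = (γ - 1) n' / n`, i.e. `T n ^ (1 - γ)` is constant.
The adiabatic relation turns the pressure force per particle `(R T n)' / n` into the derivative of
the enthalpy `γ R T / (γ - 1)`, so the total energy `m u² / 2 + γ R T / (γ - 1) - φ` is constant
as well. The far field fixes the three constants, and eliminating `u` and `T` leaves `φ` as a
function of `n`.
-/

open scoped Topology

theorem eq_of_hasDerivWithinAt_zero_of_tendsto {𝕜 G : Type*} [RCLike 𝕜] [NormedAddCommGroup G]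
    [NormedSpace 𝕜 G] {s : Set 𝕜} {l : Filter 𝕜} [l.NeBot] {g : 𝕜 → G} {c : G}
    (hs : Convex ℝ s) (hsl : s ∈ l) (hg : ∀ x ∈ s, HasDerivWithinAt g 0 s x)
    (hlim : Tendsto g l (𝓝 c)) {x : 𝕜} (hx : x ∈ s) : g x = c := by
  have hconst : ∀ y ∈ s, g x = g y := fun y hy ↦ by
    simpa [sub_eq_zero, eq_comm] using
      hs.norm_image_sub_le_of_norm_hasDerivWithin_le (C := 0) hg (by simp) hx hy
  exact tendsto_nhds_unique (tendsto_const_nhds.congr' (eventually_of_mem hsl hconst)) hlim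

theorem hasDerivWithinAt_mul_rpow_neg_zero {f g : ℝ → ℝ} {f' g' p x : ℝ} {s : Set ℝ}
    (hf : HasDerivWithinAt f f' s x) (hg : HasDerivWithinAt g g' s x) (hx : g x ≠ 0)
    (h : f' * g x = p * f x * g') :
    HasDerivWithinAt (fun y ↦ f y * g y ^ (-p)) 0 s x := by
  refine (hf.mul (hg.rpow_const (p := -p) (Or.inl hx))).congr_deriv ?_
  have hpow : g x ^ (-p) = g x ^ (-p - 1) * g x := by rw [← rpow_add_one hx, sub_add_cancel]
  rw [hpow]
  linear_combination g x ^ (-p - 1) * h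

/-- The Sagdeev function of the ions, evaluated at the density `ν` measured in units of the
far-field density: the potential at which a flow of far-field temperature `Tinf` and velocity
`uinf` has density `ν`, normalized to vanish at `ν = 1`. -/
noncomputable def sagdeev (γ R m Tinf uinf ν : ℝ) : ℝ :=
  γ * R * Tinf / (γ - 1) * (ν ^ (γ - 1) - 1) + m * uinf ^ 2 / 2 * (ν ^ (-2 : ℝ) - 1)

/-- Stationary flow without vacuum for the mass, temperature and momentum equations of the full
Euler–Poisson system on `s`, with density `n`, velocity `u`, temperature `T` and potential `φ`.
Derivatives are taken within `s`, hence one-sided at its endpoints; `p'` is the derivative of the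
pressure `R T n`. -/
structure IsStationaryFlow (s : Set ℝ) (γ R m : ℝ) (n u T φ n' u' T' φ' p' : ℝ → ℝ) : Prop where
  density : ∀ x ∈ s, HasDerivWithinAt n (n' x) s x
  velocity : ∀ x ∈ s, HasDerivWithinAt u (u' x) s x
  temperature : ∀ x ∈ s, HasDerivWithinAt T (T' x) s x
  potential : ∀ x ∈ s, HasDerivWithinAt φ (φ' x) s x
  pressure : ∀ x ∈ s, HasDerivWithinAt (fun y ↦ R * T y * n y) (p' x) s x
  density_pos : ∀ x ∈ s, 0 < n x
  mass_eq : ∀ x ∈ s, n' x * u x + n x * u' x = 0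
  temperature_eq : ∀ x ∈ s, u x * T' x + (γ - 1) * T x * u' x = 0
  momentum_eq : ∀ x ∈ s, m * n x * u x * u' x + p' x = n x * φ' x

namespace IsStationaryFlow

variable {s : Set ℝ} {γ R m : ℝ} {n u T φ n' u' T' φ' p' : ℝ → ℝ} {x : ℝ}

theorem temperature_deriv_mul_density (h : IsStationaryFlow s γ R m n u T φ n' u' T' φ' p')
    (hx : x ∈ s) (hux : u x ≠ 0) : T' x * n x = (γ - 1) * T x * n' x := by
  apply mul_left_cancel₀ hux
  linear_combination n x * h.temperature_eq x hx - (γ - 1) * T x * h.mass_eq x hx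

theorem pressure_deriv_eq (h : IsStationaryFlow s γ R m n u T φ n' u' T' φ' p')
    (hs : UniqueDiffWithinAt ℝ s x) (hx : x ∈ s) :
    p' x = R * T' x * n x + R * T x * n' x :=
  hs.eq_deriv _ (h.pressure x hx) (((h.temperature x hx).const_mul R).mul (h.density x hx))

theorem pressure_deriv_eq_density_mul_enthalpy_deriv
    (h : IsStationaryFlow s γ R m n u T φ n' u' T' φ' p') (hs : UniqueDiffWithinAt ℝ s x)
    (hx : x ∈ s) (hux : u x ≠ 0) (hγ : γ ≠ 1) :
    p' x = n x * (γ * R / (γ - 1) * T' x) := by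
  have hγ' : γ - 1 ≠ 0 := sub_ne_zero.mpr hγ
  rw [h.pressure_deriv_eq hs hx]
  field_simp
  linear_combination -R * h.temperature_deriv_mul_density hx hux

theorem hasDerivWithinAt_energy_zero (h : IsStationaryFlow s γ R m n u T φ n' u' T' φ' p')
    (hs : UniqueDiffWithinAt ℝ s x) (hx : x ∈ s) (hux : u x ≠ 0) (hγ : γ ≠ 1) :
    HasDerivWithinAt (fun y ↦ m / 2 * u y ^ 2 + γ * R / (γ - 1) * T y - φ y) 0 s x := by
  refine (((((h.velocity x hx).pow 2).const_mul (m / 2)).add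
    ((h.temperature x hx).const_mul (γ * R / (γ - 1)))).sub (h.potential x hx)).congr_deriv ?_
  apply mul_left_cancel₀ (h.density_pos x hx).ne'
  have hmom := h.momentum_eq x hx
  rw [h.pressure_deriv_eq_density_mul_enthalpy_deriv hs hx hux hγ] at hmom
  linear_combination hmom

variable {l : Filter ℝ} [l.NeBot] {ninf uinf Tinf φinf : ℝ}

theorem mass_flux_eq (h : IsStationaryFlow s γ R m n u T φ n' u' T' φ' p') (hs : Convex ℝ s)
    (hsl : s ∈ l) (hn : Tendsto n l (𝓝 ninf)) (hu : Tendsto u l (𝓝 uinf)) (hx : x ∈ s) :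
    n x * u x = ninf * uinf :=
  eq_of_hasDerivWithinAt_zero_of_tendsto hs hsl
    (fun y hy ↦ ((h.density y hy).mul (h.velocity y hy)).congr_deriv (h.mass_eq y hy))
    (hn.mul hu) hx

theorem velocity_ne_zero (h : IsStationaryFlow s γ R m n u T φ n' u' T' φ' p') (hs : Convex ℝ s)
    (hsl : s ∈ l) (hn : Tendsto n l (𝓝 ninf)) (hu : Tendsto u l (𝓝 uinf)) (hninf : ninf ≠ 0)
    (huinf : uinf ≠ 0) (hx : x ∈ s) : u x ≠ 0 :=
  right_ne_zero_of_mul (h.mass_flux_eq hs hsl hn hu hx ▸ mul_ne_zero hninf huinf)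

theorem velocity_sq_eq (h : IsStationaryFlow s γ R m n u T φ n' u' T' φ' p') (hs : Convex ℝ s)
    (hsl : s ∈ l) (hn : Tendsto n l (𝓝 ninf)) (hu : Tendsto u l (𝓝 uinf)) (hninf : 0 < ninf)
    (hx : x ∈ s) : u x ^ 2 = uinf ^ 2 * (n x / ninf) ^ (-2 : ℝ) := by
  have hnx := h.density_pos x hx
  rw [rpow_neg (div_pos hnx hninf).le, rpow_two]
  field_simp
  rw [← mul_pow, ← mul_pow, mul_comm (u x), mul_comm uinf, h.mass_flux_eq hs hsl hn hu hx]

theorem temperature_eq_rpow (h : IsStationaryFlow s γ R m n u T φ n' u' T' φ' p')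
    (hs : Convex ℝ s) (hsl : s ∈ l) (hn : Tendsto n l (𝓝 ninf)) (hT : Tendsto T l (𝓝 Tinf))
    (hninf : 0 < ninf) (hu0 : ∀ y ∈ s, u y ≠ 0) (hx : x ∈ s) :
    T x = Tinf * (n x / ninf) ^ (γ - 1) := by
  have hnx := h.density_pos x hx
  have hentropy : T x * n x ^ (-(γ - 1)) = Tinf * ninf ^ (-(γ - 1)) :=
    eq_of_hasDerivWithinAt_zero_of_tendsto hs hsl
      (fun y hy ↦ hasDerivWithinAt_mul_rpow_neg_zero (h.temperature y hy) (h.density y hy)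
        (h.density_pos y hy).ne' (h.temperature_deriv_mul_density hy (hu0 y hy)))
      (hT.mul (hn.rpow_const (Or.inl hninf.ne'))) hx
  rw [rpow_neg hnx.le, rpow_neg hninf.le] at hentropy
  rw [div_rpow hnx.le hninf.le]
  field_simp at hentropy ⊢
  exact hentropy

theorem energy_eq (h : IsStationaryFlow s γ R m n u T φ n' u' T' φ' p') (hs : Convex ℝ s)
    (hs' : UniqueDiffOn ℝ s) (hsl : s ∈ l) (hγ : γ ≠ 1) (hu : Tendsto u l (𝓝 uinf))
    (hT : Tendsto T l (𝓝 Tinf)) (hφ : Tendsto φ l (𝓝 φinf)) (hu0 : ∀ y ∈ s, u y ≠ 0)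
    (hx : x ∈ s) :
    m / 2 * u x ^ 2 + γ * R / (γ - 1) * T x - φ x =
      m / 2 * uinf ^ 2 + γ * R / (γ - 1) * Tinf - φinf :=
  eq_of_hasDerivWithinAt_zero_of_tendsto hs hsl
    (fun y hy ↦ h.hasDerivWithinAt_energy_zero (hs' y hy) hy (hu0 y hy) hγ)
    ((((hu.pow 2).const_mul _).add (hT.const_mul _)).sub hφ) hx

end IsStationaryFlow

theorem stationary_bernoulli_law_general {s : Set ℝ} {l : Filter ℝ} [l.NeBot]
    {γ R m ninf uinf Tinf φinf : ℝ} {n u T φ n' u' T' φ' p' : ℝ → ℝ}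
    (h : IsStationaryFlow s γ R m n u T φ n' u' T' φ' p')
    (hs : Convex ℝ s) (hs' : UniqueDiffOn ℝ s) (hsl : s ∈ l)
    (hγ : γ ≠ 1) (hninf : 0 < ninf) (huinf : uinf ≠ 0)
    (hn : Tendsto n l (𝓝 ninf)) (hu : Tendsto u l (𝓝 uinf))
    (hT : Tendsto T l (𝓝 Tinf)) (hφ : Tendsto φ l (𝓝 φinf)) {x : ℝ} (hx : x ∈ s) :
    φ x = φinf + sagdeev γ R m Tinf uinf (n x / ninf) := by
  have hu0 : ∀ y ∈ s, u y ≠ 0 := fun y hy ↦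
    h.velocity_ne_zero hs hsl hn hu hninf.ne' huinf hy
  have henergy := h.energy_eq hs hs' hsl hγ hu hT hφ hu0 hx
  rw [h.velocity_sq_eq hs hsl hn hu hninf hx,
    h.temperature_eq_rpow hs hsl hn hT hninf hu0 hx] at henergy
  rw [sagdeev]
  linear_combination -henergy

/-- Bernoulli law for the stationary sheath: under the stationary mass, temperature and
momentum equations with the far-field conditions, the potential satisfies
`φ̃(x) = f(ñ(x))` for all `x ≥ 0`, where `f` is the Sagdeev function. -/
theorem stationary_bernoulli_law
    (γ R Tinf m uinf : ℝ) (hγ : 1 < γ) (hR : 0 < R) (hT : 0 < Tinf) (hm : 0 < m)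
    (hu : uinf < 0)
    (f : ℝ → ℝ)
    (hf : ∀ n : ℝ, f n =
      (γ * R * Tinf / (γ - 1)) * (n ^ (γ - 1) - 1)
        + (m * uinf ^ 2 / 2) * (n ^ (-2 : ℝ) - 1))
    (n u T φ n' u' T' φd p' : ℝ → ℝ)
    (hn : ∀ x ∈ Ici (0 : ℝ), HasDerivWithinAt n (n' x) (Ici 0) x)
    (hud : ∀ x ∈ Ici (0 : ℝ), HasDerivWithinAt u (u' x) (Ici 0) x)
    (hTd : ∀ x ∈ Ici (0 : ℝ), HasDerivWithinAt T (T' x) (Ici 0) x)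
    (hφd : ∀ x ∈ Ici (0 : ℝ), HasDerivWithinAt φ (φd x) (Ici 0) x)
    (hpd : ∀ x ∈ Ici (0 : ℝ),
      HasDerivWithinAt (fun y => R * T y * n y) (p' x) (Ici 0) x)
    (hnpos : ∀ x ∈ Ici (0 : ℝ), 0 < n x)
    (hTpos : ∀ x ∈ Ici (0 : ℝ), 0 < T x)
    (hmass : ∀ x ∈ Ici (0 : ℝ), n' x * u x + n x * u' x = 0)
    (htemp : ∀ x ∈ Ici (0 : ℝ), u x * T' x + (γ - 1) * T x * u' x = 0)
    (hmom : ∀ x ∈ Ici (0 : ℝ), m * n x * u x * u' x + p' x = n x * φd x)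
    (hnlim : Tendsto n atTop (nhds 1))
    (hulim : Tendsto u atTop (nhds uinf))
    (hTlim : Tendsto T atTop (nhds Tinf))
    (hφlim : Tendsto φ atTop (nhds 0)) :
    ∀ x ∈ Ici (0 : ℝ), φ x = f (n x) := by
  intro x hx
  simpa [sagdeev, hf] using stationary_bernoulli_law_general
    ⟨hn, hud, hTd, hφd, hpd, hnpos, hmass, htemp, hmom⟩ (convex_Ici 0) (uniqueDiffOn_Ici 0)
    (Ici_mem_atTop 0) hγ.ne' one_pos hu.ne hnlim hulim hTlim hφlim hx
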